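/- arXiv:2502.14857 — 8 statements merged into one kernel-verified Lean document; each statement's English description precedes it below -/
import Mathlib

section
/- Let $X, Y, Z$ be upward closed systems in $Q_n$ with $|X| = |Y| = |Z| = m$, and let $S_1 = (X \setminus (Y \cup Z)) \cup (Y \setminus (X \cup Z)) \cup (Z \setminus (X \cup Y))$ be the family of sets lying in exactly one of $X, Y, Z$. Then $|S_1| \cdot (2^n + m) \le 3m(2^n - m)$ (equivalently, writing $m = \rho 2^n$, $|S_1|/2^n \le 3\rho(1-\rho)/(1+\rho)$). -/
/-!
Harris' inequality applied to the pair of up-sets `X` and `Y ∪ Z` gives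
`|X| |Y ∪ Z| ≤ 2^n |X ∩ (Y ∪ Z)|`, and likewise for the other two pairs. Write `K` for the sum of the
three cardinalities `|X ∩ (Y ∪ Z)|`, `U` for the sum of the three `|Y ∪ Z|`, and `sᵢ` for the number
of points lying in exactly `i` of the three families, so that `3m = s₁ + 2s₂ + 3s₃`. The sum of the
Harris inequalities is `m U ≤ 2^n K`. Also `K = 2s₂ + 3s₃ = 3m - s₁`, while
`U = 2s₁ + 3s₂ + 3s₃ ≥ 6m - K`. Hence `6m² ≤ (2^n + m) K = (2^n + m) (3m - s₁)`, which rearranges to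
the claim.
-/

/-- Harris' inequality for one up-set against the union of two others. -/
lemma harris_inter_union {n : ℕ} {X Y Z : Finset (Finset (Fin n))}
    (hX : ∀ A B : Finset (Fin n), A ∈ X → A ⊆ B → B ∈ X)
    (hY : ∀ A B : Finset (Fin n), A ∈ Y → A ⊆ B → B ∈ Y)
    (hZ : ∀ A B : Finset (Fin n), A ∈ Z → A ⊆ B → B ∈ Z) :
    X.card * (Y ∪ Z).card ≤ 2 ^ n * (X ∩ (Y ∪ Z)).card := by
  have hX' : IsUpperSet (X : Set (Finset (Fin n))) := fun A B hAB hA => hX A B hA hAB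
  have hYZ : IsUpperSet ((Y ∪ Z : Finset (Finset (Fin n))) : Set (Finset (Fin n))) := by
    intro A B hAB hA
    simp only [Finset.coe_union, Set.mem_union, Finset.mem_coe] at hA ⊢
    exact hA.imp (fun h => hY A B h hAB) (fun h => hZ A B h hAB)
  simpa using hX'.le_card_inter_finset hYZ

/-- The identity `s₁ + (2s₂ + 3s₃) = |X| + |Y| + |Z|`. -/
lemma card_exactly_one_add {α : Type*} [Fintype α] [DecidableEq α] (X Y Z : Finset α) :
    ((X \ (Y ∪ Z)) ∪ (Y \ (X ∪ Z)) ∪ (Z \ (X ∪ Y))).card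
      + ((X ∩ (Y ∪ Z)).card + (Y ∩ (X ∪ Z)).card + (Z ∩ (X ∪ Y)).card)
      = X.card + Y.card + Z.card := by
  have key (S : Finset α) : S.card = ∑ x, if x ∈ S then 1 else 0 := by simp
  simp only [key, ← Finset.sum_add_distrib]
  refine Finset.sum_congr rfl fun x _ => ?_
  by_cases hx : x ∈ X <;> by_cases hy : x ∈ Y <;> by_cases hz : x ∈ Z <;> simp [hx, hy, hz]

/-- The inequality `2s₁ + 4s₂ + 6s₃ ≤ (2s₁ + 3s₂ + 3s₃) + (2s₂ + 3s₃)`. -/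
lemma two_mul_card_le {α : Type*} [Fintype α] [DecidableEq α] (X Y Z : Finset α) :
    2 * (X.card + Y.card + Z.card)
      ≤ ((Y ∪ Z).card + (X ∪ Z).card + (X ∪ Y).card)
        + ((X ∩ (Y ∪ Z)).card + (Y ∩ (X ∪ Z)).card + (Z ∩ (X ∪ Y)).card) := by
  have key (S : Finset α) : S.card = ∑ x, if x ∈ S then 1 else 0 := by simp
  simp only [key, ← Finset.sum_add_distrib, Finset.mul_sum]
  refine Finset.sum_le_sum fun x _ => ?_
  by_cases hx : x ∈ X <;> by_cases hy : x ∈ Y <;> by_cases hz : x ∈ Z <;> simp [hx, hy, hz]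


/-- For upward closed systems `X, Y, Z` in the cube `Q_n` with
`|X| = |Y| = |Z| = m`, the set `S₁` of points in exactly one of `X, Y, Z`
satisfies `|S₁| · (2^n + m) ≤ 3m(2^n - m)`. -/
theorem statement0 (n m : ℕ) (X Y Z : Finset (Finset (Fin n)))
    (hX : ∀ A B : Finset (Fin n), A ∈ X → A ⊆ B → B ∈ X)
    (hY : ∀ A B : Finset (Fin n), A ∈ Y → A ⊆ B → B ∈ Y)
    (hZ : ∀ A B : Finset (Fin n), A ∈ Z → A ⊆ B → B ∈ Z)
    (hXm : X.card = m) (hYm : Y.card = m) (hZm : Z.card = m) :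
    ((X \ (Y ∪ Z)) ∪ (Y \ (X ∪ Z)) ∪ (Z \ (X ∪ Y))).card * (2 ^ n + m)
      ≤ 3 * m * (2 ^ n - m) := by
  have h₁ := harris_inter_union hX hY hZ
  have h₂ := harris_inter_union hY hX hZ
  have h₃ := harris_inter_union hZ hX hY
  have hs := card_exactly_one_add X Y Z
  have hU := two_mul_card_le X Y Z
  rw [hXm] at h₁
  rw [hYm] at h₂
  rw [hZm] at h₃
  rw [hXm, hYm, hZm] at hs hU
  -- `m ≤ 2 ^ n` makes the truncated subtraction in the goal a genuine one.
  have hm : m ≤ 2 ^ n := by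
    have := Finset.card_le_univ X
    simpa [hXm] using this
  generalize 2 ^ n = N at *
  generalize ((X \ (Y ∪ Z)) ∪ (Y \ (X ∪ Z)) ∪ (Z \ (X ∪ Y))).card = s at *
  obtain ⟨d, rfl⟩ := Nat.exists_eq_add_of_le hm
  rw [Nat.add_sub_cancel_left]
  have hmU := Nat.mul_le_mul_left m hU
  zify at *
  have hs' := congrArg (fun t : ℤ => (m + d + m) * t) hs
  linarith
end

section
/- There exist a positive integer $n$ and upward closed systems $X, Y, Z$ in $Q_n$ with $|X| = |Y| = |Z|$ such that $|S_1| > \frac{4}{9} \cdot 2^n$, where $S_1$ is the family of sets lying in exactly one of $X, Y, Z$. In fact, one may take $n = 21$, $|X| = |Y| = |Z| = \frac{3}{8} \cdot 2^{21}$, and $|S_1| > 0.447 \cdot 2^{21}$. -/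
/-!
Let `X` and `Z` be independent events of probability `3/8`, and let `Y ⊇ V` be obtained from a third
independent event `V` of probability `q` by adding points of `X ∩ Z`. The added points already lie
in two of the families, so they do not affect the set `S₁` of points in exactly one family, and
`|S₁| / 2 ^ n = 2 * (3/8) * (5/8) * (1 - q) + (5/8) ^ 2 * q`. They do increase `|Y|`, so `Y` can have
density `3/8` although `q` is only about `3/11`; this value of `q` gives about `0.4474 > 4/9`.

To realise this with `n = 21`, the ground set is split into blocks of `3`, `3` and `15` elements.
The trace of `A` on a block is read as a binary number, which is monotone in `A`, and the three
numbers `a`, `b`, `c` identify the sets with the points of a box of size `8 * 8 * 2 ^ 15`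
(`card_box`). The families are `X = {a ≥ 5}`, `Z = {b ≥ 5}` and
`Y = {c ≥ 23828} ∪ {a ≥ 5, b ≥ 5, c ≥ 20}`. The two cut-offs make `|Y|` exact:
`64 * 8940 + 3 * 3 * (23828 - 20) = 3 * 2 ^ 18`, where `8940 = 2 ^ 15 - 23828`.
-/

/-- The number whose binary digits, least significant first, record which of the elements
`l, l + 1, …, h - 1` belong to `A`. -/
def blockVal (l h : ℕ) (A : Finset (Fin 21)) : ℕ :=
  ∑ i ∈ A, if l ≤ (i : ℕ) ∧ (i : ℕ) < h then 2 ^ ((i : ℕ) - l) else 0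

lemma blockVal_mono (l h : ℕ) {A B : Finset (Fin 21)} (hAB : A ⊆ B) :
    blockVal l h A ≤ blockVal l h B :=
  Finset.sum_le_sum_of_subset hAB

lemma blockVal_lt (A : Finset (Fin 21)) :
    blockVal 0 3 A < 8 ∧ blockVal 3 6 A < 8 ∧ blockVal 6 21 A < 32768 := by
  have h0 := blockVal_mono 0 3 (Finset.subset_univ A)
  have h1 := blockVal_mono 3 6 (Finset.subset_univ A)
  have h2 := blockVal_mono 6 21 (Finset.subset_univ A)
  have e0 : blockVal 0 3 Finset.univ = 7 := by decide
  have e1 : blockVal 3 6 Finset.univ = 7 := by decide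
  have e2 : blockVal 6 21 Finset.univ = 32767 := by decide
  omega

lemma blockVal_sum (A : Finset (Fin 21)) :
    blockVal 0 3 A + 8 * blockVal 3 6 A + 64 * blockVal 6 21 A = ∑ i ∈ A, 2 ^ (i : ℕ) := by
  simp only [blockVal, Finset.mul_sum, ← Finset.sum_add_distrib]
  refine Finset.sum_congr rfl fun i hi => ?_
  clear hi
  revert i
  decide

/-- The three block values of a set. -/
def coords (A : Finset (Fin 21)) : ℕ × ℕ × ℕ :=
  (blockVal 0 3 A, blockVal 3 6 A, blockVal 6 21 A)

lemma coords_injective : Function.Injective coords := by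
  intro A B h
  simp only [coords, Prod.mk.injEq] at h
  have hs : ∑ i ∈ A, 2 ^ (i : ℕ) = ∑ i ∈ B, 2 ^ (i : ℕ) := by
    rw [← blockVal_sum, ← blockVal_sum, h.1, h.2.1, h.2.2]
  have hm : A.map Fin.valEmbedding = B.map Fin.valEmbedding := by
    apply Finset.geomSum_injective (le_refl 2)
    simpa [Finset.sum_map] using hs
  exact Finset.map_injective _ hm

/-- An injection from a set of size `2 ^ 21` into a box of the same size is onto. -/
lemma image_coords :
    Finset.univ.image coords =
      Finset.range 8 ×ˢ Finset.range 8 ×ˢ Finset.range 32768 := by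
  apply Finset.eq_of_subset_of_card_le
  · intro p hp
    obtain ⟨A, -, rfl⟩ := Finset.mem_image.1 hp
    simpa [coords] using blockVal_lt A
  · rw [Finset.card_image_of_injective _ coords_injective]
    simp

/-- The sets whose block values lie in the given half-open intervals. -/
def box (a₀ a₁ b₀ b₁ c₀ c₁ : ℕ) : Finset (Finset (Fin 21)) :=
  Finset.univ.filter fun A =>
    coords A ∈ Finset.Ico a₀ a₁ ×ˢ Finset.Ico b₀ b₁ ×ˢ Finset.Ico c₀ c₁

lemma mem_box {a₀ a₁ b₀ b₁ c₀ c₁ : ℕ} {A : Finset (Fin 21)} :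
    A ∈ box a₀ a₁ b₀ b₁ c₀ c₁ ↔
      (a₀ ≤ blockVal 0 3 A ∧ blockVal 0 3 A < a₁) ∧
      (b₀ ≤ blockVal 3 6 A ∧ blockVal 3 6 A < b₁) ∧
      (c₀ ≤ blockVal 6 21 A ∧ blockVal 6 21 A < c₁) := by
  simp [box, coords]

lemma card_box {a₀ a₁ b₀ b₁ c₀ c₁ : ℕ} (ha : a₁ ≤ 8) (hb : b₁ ≤ 8) (hc : c₁ ≤ 32768) :
    (box a₀ a₁ b₀ b₁ c₀ c₁).card = (a₁ - a₀) * ((b₁ - b₀) * (c₁ - c₀)) := by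
  have him : (box a₀ a₁ b₀ b₁ c₀ c₁).image coords =
      Finset.Ico a₀ a₁ ×ˢ Finset.Ico b₀ b₁ ×ˢ Finset.Ico c₀ c₁ := by
    ext p
    constructor
    · intro hp
      obtain ⟨A, hA, rfl⟩ := Finset.mem_image.1 hp
      exact (Finset.mem_filter.1 hA).2
    · intro hp
      have hp' : p ∈ Finset.univ.image coords := by
        rw [image_coords]
        simp only [Finset.mem_product, Finset.mem_Ico, Finset.mem_range] at hp ⊢
        omega
      obtain ⟨A, -, rfl⟩ := Finset.mem_image.1 hp'
      exact Finset.mem_image_of_mem _ (Finset.mem_filter.2 ⟨Finset.mem_univ _, hp⟩)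
  rw [← Finset.card_image_of_injective _ coords_injective, him]
  simp

/-- A counterexample to Kahn's conjecture: there exist `n` and upward closed
systems `X, Y, Z` in `Q_n` of equal size such that the set of points in exactly
one of them has size `> (4/9)·2^n`; in fact one may take `n = 21`,
`|X| = |Y| = |Z| = (3/8)·2^21` and `|S₁| > 0.447·2^21`. -/
theorem statement1 :
    ∃ (n : ℕ), 0 < n ∧
      ∃ X Y Z : Finset (Finset (Fin n)),
        (∀ A B : Finset (Fin n), A ∈ X → A ⊆ B → B ∈ X) ∧
        (∀ A B : Finset (Fin n), A ∈ Y → A ⊆ B → B ∈ Y) ∧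
        (∀ A B : Finset (Fin n), A ∈ Z → A ⊆ B → B ∈ Z) ∧
        X.card = Y.card ∧ Y.card = Z.card ∧
        (((X \ (Y ∪ Z)) ∪ (Y \ (X ∪ Z)) ∪ (Z \ (X ∪ Y))).card : ℝ)
          > (4 / 9) * 2 ^ n ∧
        n = 21 ∧ X.card = 3 * 2 ^ 21 / 8 ∧
        (((X \ (Y ∪ Z)) ∪ (Y \ (X ∪ Z)) ∪ (Z \ (X ∪ Y))).card : ℝ)
          > 0.447 * 2 ^ 21 := by
  obtain ⟨X, hX⟩ : ∃ X, X = box 5 8 0 8 0 32768 := ⟨_, rfl⟩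
  obtain ⟨Z, hZ⟩ : ∃ Z, Z = box 0 8 5 8 0 32768 := ⟨_, rfl⟩
  obtain ⟨Y, hY⟩ : ∃ Y, Y = box 0 8 0 8 23828 32768 ∪ box 5 8 5 8 20 23828 := ⟨_, rfl⟩
  have cX : X.card = 786432 := by
    rw [hX, card_box] <;> norm_num
  have cZ : Z.card = 786432 := by
    rw [hZ, card_box] <;> norm_num
  have cY : Y.card = 786432 := by
    rw [hY, Finset.card_union_of_disjoint, card_box, card_box] <;> try norm_num
    rw [Finset.disjoint_left]
    intro A h1 h2
    rw [mem_box] at h1 h2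
    omega
  have hS : (X \ (Y ∪ Z)) ∪ (Y \ (X ∪ Z)) ∪ (Z \ (X ∪ Y)) =
      box 5 8 0 5 0 23828 ∪ box 0 5 0 5 23828 32768 ∪ box 0 5 5 8 0 23828 := by
    ext A
    have := blockVal_lt A
    simp only [hX, hY, hZ, Finset.mem_union, Finset.mem_sdiff, mem_box]
    omega
  have cS : ((X \ (Y ∪ Z)) ∪ (Y \ (X ∪ Z)) ∪ (Z \ (X ∪ Y))).card = 938340 := by
    rw [hS, Finset.card_union_of_disjoint, Finset.card_union_of_disjoint, card_box, card_box,
      card_box] <;> try norm_num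
    · simp only [Finset.disjoint_left, mem_box]
      intro A
      omega
    · simp only [Finset.disjoint_left, mem_box]
      constructor <;> intro A <;> omega
  refine ⟨21, by norm_num, X, Y, Z, ?_, ?_, ?_, by rw [cX, cY], by rw [cY, cZ], ?_, rfl,
    by rw [cX]; norm_num, ?_⟩
  iterate 3
    intro A B hA hAB
    have h0 := blockVal_mono 0 3 hAB
    have h1 := blockVal_mono 3 6 hAB
    have h2 := blockVal_mono 6 21 hAB
    have hB := blockVal_lt B
    simp only [hX, hY, hZ, Finset.mem_union, mem_box] at hA ⊢
    omega
  · rw [cS]; norm_num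
  · rw [cS]; norm_num
end

section
/- There exist upward closed systems $X, Y, Z$ in $Q_5$, each of cardinality $16$ (i.e., of density $\rho = 1/2$), such that the family $S_1$ of sets lying in exactly one of $X, Y, Z$ has cardinality $13$, which exceeds $3\rho(1-\rho)^2 \cdot 2^5 = 12$. -/
/-!
Take `X` and `Z` to be the principal upper sets of `{5}` and of `{1}`, and let `Y` be the upper set
generated by `{2,4}`, `{3,4}`, `{1,2,5}`, `{1,3,5}` and `{1,4,5}`. Split `Q_5` into four copies of
the power set of `{2,3,4}` according to the trace on `{1,5}`. When the trace is not `{1,5}`, the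
fibre of `Y` is the upper set of `{2,4}` and `{3,4}`, of size `3`; over `{1,5}` it consists of all
`7` nonempty sets, so `|Y| = 3 * 3 + 7 = 16`. A set with trace `∅` lies in exactly one system when
it is in `Y` (`3` sets), a set with trace `{1}` or `{5}` when it is not in `Y` (`5` sets each), and
a set with trace `{1,5}` never does: in total `3 + 5 + 5 = 13`.

Each system is cut out of the power set by a monotone predicate, which gives upward closedness;
the cardinalities are evaluated in the kernel.
-/

theorem mem_filter_powerset_of_monotone {U : Finset ℕ} {p : Finset ℕ → Prop} [DecidablePred p]
    (hp : Monotone p) (A B : Finset ℕ) (hA : A ∈ U.powerset.filter p) (hAB : A ⊆ B) (hB : B ⊆ U) :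
    B ∈ U.powerset.filter p :=
  Finset.mem_filter.2 ⟨Finset.mem_powerset.2 hB, hp hAB (Finset.mem_filter.1 hA).2⟩

/-- There exist upward closed systems `X, Y, Z` in `Q_5` each of cardinality
`16` (density `1/2`) with `|S₁| = 13 > 3·(1/2)·(1/2)²·2^5 = 12`. -/
theorem statement2 :
    ∃ X Y Z : Finset (Finset ℕ),
      X ⊆ (Finset.Icc 1 5).powerset ∧
      Y ⊆ (Finset.Icc 1 5).powerset ∧
      Z ⊆ (Finset.Icc 1 5).powerset ∧
      (∀ A B : Finset ℕ, A ∈ X → A ⊆ B → B ⊆ Finset.Icc 1 5 → B ∈ X) ∧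
      (∀ A B : Finset ℕ, A ∈ Y → A ⊆ B → B ⊆ Finset.Icc 1 5 → B ∈ Y) ∧
      (∀ A B : Finset ℕ, A ∈ Z → A ⊆ B → B ⊆ Finset.Icc 1 5 → B ∈ Z) ∧
      X.card = 16 ∧ Y.card = 16 ∧ Z.card = 16 ∧
      ((X \ (Y ∪ Z)) ∪ (Y \ (X ∪ Z)) ∪ (Z \ (X ∪ Y))).card = 13 ∧
      13 > 3 * ((1 : ℚ) / 2) * (1 - 1 / 2) ^ 2 * 2 ^ 5 := by
  refine ⟨(Finset.Icc 1 5).powerset.filter (fun A => 5 ∈ A),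
    (Finset.Icc 1 5).powerset.filter (fun A =>
      (4 ∈ A ∧ (2 ∈ A ∨ 3 ∈ A)) ∨ (1 ∈ A ∧ 5 ∈ A ∧ (2 ∈ A ∨ 3 ∈ A ∨ 4 ∈ A))),
    (Finset.Icc 1 5).powerset.filter (fun A => 1 ∈ A),
    Finset.filter_subset _ _, Finset.filter_subset _ _, Finset.filter_subset _ _,
    mem_filter_powerset_of_monotone fun A B h hA => h hA,
    mem_filter_powerset_of_monotone fun A B h hA => ?_,
    mem_filter_powerset_of_monotone fun A B h hA => h hA,
    by decide +kernel, by decide +kernel, by decide +kernel, by decide +kernel, by norm_num⟩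
  have h1 := @h 1
  have h2 := @h 2
  have h3 := @h 3
  have h4 := @h 4
  have h5 := @h 5
  tauto
end

section
/- Let $X, Y, Z$ be upward closed systems in $Q_n$ with $|X| = |Y| = |Z| = m$, and let $S_1$ denote the family of sets lying in exactly one of $X, Y, Z$. Then $3m \cdot |Q_n \setminus (X \cup Y \cup Z)| \ge (2^n - m) \cdot |S_1|$. -/
/-! Write `N = 2 ^ n`. For two upper sets `X`, `V`, the Harris-Kleitman inequality applied to
their complements (lower sets) gives `|Xᶜ| * |Vᶜ| ≤ N * |Xᶜ ∩ Vᶜ|`. Since `Vᶜ` is the disjoint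
union of `X \ V` and `Xᶜ ∩ Vᶜ`, this rearranges to `(N - m) * |X \ V| ≤ m * |Xᶜ ∩ Vᶜ|` with
`m = |X|`. Taking `V` to be the union of the other two families bounds the number of sets lying
only in `X`; the same holds for `Y` and `Z`, always with `|(X ∪ Y ∪ Z)ᶜ|` on the right, and the
three bounds add up to the claim. -/

theorem card_sdiff_mul_le {n m : ℕ} {X V : Finset (Finset (Fin n))}
    (hX : ∀ A B : Finset (Fin n), A ∈ X → A ⊆ B → B ∈ X)
    (hV : ∀ A B : Finset (Fin n), A ∈ V → A ⊆ B → B ∈ V) (hXm : X.card = m) :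
    (2 ^ n - m) * (X \ V).card ≤ m * (Finset.univ \ (X ∪ V)).card := by
  have hXl : IsLowerSet ((Xᶜ : Finset (Finset (Fin n))) : Set (Finset (Fin n))) := by
    intro A B hBA hA
    simp only [Finset.coe_compl, Set.mem_compl_iff, Finset.mem_coe] at hA ⊢
    exact fun hB => hA (hX B A hB hBA)
  have hVl : IsLowerSet ((Vᶜ : Finset (Finset (Fin n))) : Set (Finset (Fin n))) := by
    intro A B hBA hA
    simp only [Finset.coe_compl, Set.mem_compl_iff, Finset.mem_coe] at hA ⊢
    exact fun hB => hA (hV B A hB hBA)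
  have hHK := hXl.le_card_inter_finset hVl
  have hint : Xᶜ ∩ Vᶜ = Finset.univ \ (X ∪ V) := by ext; simp
  have hsplit : Vᶜ.card = (X \ V).card + (Finset.univ \ (X ∪ V)).card := by
    rw [← Finset.card_union_of_disjoint]
    · congr 1
      ext A
      simp only [Finset.mem_compl, Finset.mem_union, Finset.mem_sdiff, Finset.mem_univ]
      tauto
    · rw [Finset.disjoint_left]
      intro A
      simp only [Finset.mem_union, Finset.mem_sdiff, Finset.mem_univ]
      tauto
  have hcompl : Xᶜ.card = 2 ^ n - m := by simp [Finset.card_compl, hXm]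
  have hm : m ≤ 2 ^ n := by
    rw [← hXm]
    simpa using Finset.card_le_univ X
  rw [hint, hsplit, hcompl, Fintype.card_fin] at hHK
  obtain ⟨k, hk⟩ := Nat.exists_eq_add_of_le hm
  rw [hk, Nat.add_sub_cancel_left] at hHK ⊢
  nlinarith

/-- For upward closed `X, Y, Z` in `Q_n` with `|X| = |Y| = |Z| = m` and `S₁`
the family of sets in exactly one of `X, Y, Z`, one has
`3m·|Q_n \ (X ∪ Y ∪ Z)| ≥ (2^n - m)·|S₁|`. -/
theorem statement7 (n m : ℕ) (X Y Z : Finset (Finset (Fin n)))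
    (hX : ∀ A B : Finset (Fin n), A ∈ X → A ⊆ B → B ∈ X)
    (hY : ∀ A B : Finset (Fin n), A ∈ Y → A ⊆ B → B ∈ Y)
    (hZ : ∀ A B : Finset (Fin n), A ∈ Z → A ⊆ B → B ∈ Z)
    (hXm : X.card = m) (hYm : Y.card = m) (hZm : Z.card = m) :
    3 * m * ((Finset.univ : Finset (Finset (Fin n))) \ (X ∪ Y ∪ Z)).card
      ≥ (2 ^ n - m) * ((X \ (Y ∪ Z)) ∪ (Y \ (X ∪ Z)) ∪ (Z \ (X ∪ Y))).card := by
  have union_upper : ∀ {V W : Finset (Finset (Fin n))},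
      (∀ A B : Finset (Fin n), A ∈ V → A ⊆ B → B ∈ V) →
      (∀ A B : Finset (Fin n), A ∈ W → A ⊆ B → B ∈ W) →
      ∀ A B : Finset (Fin n), A ∈ V ∪ W → A ⊆ B → B ∈ V ∪ W := by
    intro V W hV hW A B hA hAB
    rw [Finset.mem_union] at hA ⊢
    exact hA.imp (hV A B · hAB) (hW A B · hAB)
  have h1 := card_sdiff_mul_le hX (union_upper hY hZ) hXm
  have h2 := card_sdiff_mul_le hY (union_upper hX hZ) hYm
  have h3 := card_sdiff_mul_le hZ (union_upper hX hY) hZm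
  rw [← Finset.union_assoc] at h1
  rw [Finset.union_left_comm, ← Finset.union_assoc] at h2
  rw [Finset.union_comm Z] at h3
  have hle : ((X \ (Y ∪ Z)) ∪ (Y \ (X ∪ Z)) ∪ (Z \ (X ∪ Y))).card
      ≤ (X \ (Y ∪ Z)).card + (Y \ (X ∪ Z)).card + (Z \ (X ∪ Y)).card :=
    (Finset.card_union_le _ _).trans (Nat.add_le_add_right (Finset.card_union_le _ _) _)
  have hmul := Nat.mul_le_mul_left (2 ^ n - m) hle
  rw [Nat.mul_add, Nat.mul_add] at hmul
  linarith
end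

section
/- Let $\rho \in [0,1]$ and let $s_0, s_1, s_2, s_3$ be nonnegative real numbers satisfying $s_0 + s_1 + s_2 + s_3 = 1$, $s_1 + 2s_2 + 3s_3 = 3\rho$, $3(1-\rho)s_3 \ge \rho s_2$, and $3\rho s_0 \ge (1-\rho)s_1$. Then $s_1 \le \frac{3\rho(1-\rho)}{1+\rho}$. -/
/-- The linear programming bound: if `ρ ∈ [0,1]` and nonnegative reals
`s₀, s₁, s₂, s₃` satisfy `s₀+s₁+s₂+s₃ = 1`, `s₁+2s₂+3s₃ = 3ρ`,
`3(1-ρ)s₃ ≥ ρs₂` and `3ρs₀ ≥ (1-ρ)s₁`, then `s₁ ≤ 3ρ(1-ρ)/(1+ρ)`. -/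
theorem statement8 (ρ s0 s1 s2 s3 : ℝ)
    (hρ : ρ ∈ Set.Icc (0 : ℝ) 1)
    (h0 : 0 ≤ s0) (h1 : 0 ≤ s1) (h2 : 0 ≤ s2) (h3 : 0 ≤ s3)
    (hsum : s0 + s1 + s2 + s3 = 1)
    (hsize : s1 + 2 * s2 + 3 * s3 = 3 * ρ)
    (hHK1 : 3 * (1 - ρ) * s3 ≥ ρ * s2)
    (hHK2 : 3 * ρ * s0 ≥ (1 - ρ) * s1) :
    s1 ≤ 3 * ρ * (1 - ρ) / (1 + ρ) := by
  have hρ0 : 0 ≤ ρ := hρ.1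
  rw [le_div_iff₀ (by linarith)]
  -- Eliminating `s3` from the two equations gives `3 s0 + 2 s1 + s2 = 3 (1 - ρ)`. Multiplied by
  -- `ρ` and combined with `hHK2`, it yields `(1 + ρ) s1 + ρ s2 ≤ 3 ρ (1 - ρ)`.
  have hlin : ρ * (3 * s0 + 2 * s1 + s2) = ρ * (3 * (1 - ρ)) := by
    congr 1
    linarith
  have hs2 : 0 ≤ ρ * s2 := mul_nonneg hρ0 h2
  linarith
end

section
/- Let $p \in [0,1]$ and for $A \subseteq \{1,\dots,n\}$ let $\mu(A) = p^{|A|}(1-p)^{n-|A|}$. If $X$ and $Y$ are upward closed systems in $Q_n$, then $\sum_{A \in X \cap Y} \mu(A) \ge \left(\sum_{A \in X} \mu(A)\right)\left(\sum_{A \in Y} \mu(A)\right)$. -/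
/-!
The weight `μ(A) = p^|A| (1-p)^(n-|A|)` is log-modular: `|A ∩ B| + |A ∪ B| = |A| + |B|` gives
`μ(A) μ(B) = μ(A ∩ B) μ(A ∪ B)`. Mathlib's FKG inequality `fkg` therefore applies to the indicator
functions of the upper sets `X` and `Y`, which are monotone. Its normalising factor `∑ A, μ(A)` is
`(p + (1 - p))^n = 1` by the binomial theorem.
-/

theorem biasedWeight_mul (n : ℕ) (p q : ℝ) (A B : Finset (Fin n)) :
    p ^ A.card * q ^ (n - A.card) * (p ^ B.card * q ^ (n - B.card)) =
      p ^ (A ∩ B).card * q ^ (n - (A ∩ B).card) *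
        (p ^ (A ∪ B).card * q ^ (n - (A ∪ B).card)) := by
  have h := Finset.card_union_add_card_inter A B
  have hA := card_finset_fin_le A
  have hB := card_finset_fin_le B
  have hU := card_finset_fin_le (A ∪ B)
  have hI := card_finset_fin_le (A ∩ B)
  rw [mul_mul_mul_comm, mul_mul_mul_comm (p ^ (A ∩ B).card), ← pow_add, ← pow_add, ← pow_add,
    ← pow_add]
  congr 2 <;> omega

theorem monotone_indicator_of_upward_closed {n : ℕ} {X : Finset (Finset (Fin n))}
    (hX : ∀ A B : Finset (Fin n), A ∈ X → A ⊆ B → B ∈ X) :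
    Monotone fun A : Finset (Fin n) => if A ∈ X then (1 : ℝ) else 0 := by
  intro A B hAB
  have := hX A B
  by_cases hA : A ∈ X
  · simp [hA, this hA hAB]
  · simp only [hA, if_false]
    positivity

/-- The `p`-biased Harris–Kleitman (FKG) inequality: for upward closed
`X, Y` in `Q_n` and the `p`-biased measure `μ(A) = p^|A|(1-p)^(n-|A|)`,
`μ(X ∩ Y) ≥ μ(X)·μ(Y)`. -/
theorem statement12 (n : ℕ) (p : ℝ) (hp : p ∈ Set.Icc (0 : ℝ) 1)
    (X Y : Finset (Finset (Fin n)))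
    (hX : ∀ A B : Finset (Fin n), A ∈ X → A ⊆ B → B ∈ X)
    (hY : ∀ A B : Finset (Fin n), A ∈ Y → A ⊆ B → B ∈ Y) :
    ∑ A ∈ X ∩ Y, p ^ A.card * (1 - p) ^ (n - A.card)
      ≥ (∑ A ∈ X, p ^ A.card * (1 - p) ^ (n - A.card))
        * (∑ A ∈ Y, p ^ A.card * (1 - p) ^ (n - A.card)) := by
  have hp0 : 0 ≤ p := hp.1
  have hq0 : 0 ≤ 1 - p := sub_nonneg.2 hp.2
  have htotal : ∑ A : Finset (Fin n), p ^ A.card * (1 - p) ^ (n - A.card) = 1 := by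
    rw [Fin.sum_pow_mul_eq_add_pow]
    simp
  have key := fkg (μ := fun A : Finset (Fin n) => p ^ A.card * (1 - p) ^ (n - A.card))
    (f := fun A => if A ∈ X then (1 : ℝ) else 0) (g := fun A => if A ∈ Y then (1 : ℝ) else 0)
    (fun A => by dsimp; positivity) (fun A => by dsimp; positivity)
    (fun A => by dsimp; positivity)
    (monotone_indicator_of_upward_closed hX) (monotone_indicator_of_upward_closed hY)
    (fun A B => (biasedWeight_mul n p (1 - p) A B).le)
  have hind : ∀ A : Finset (Fin n), (if A ∈ X then (1 : ℝ) else 0) * (if A ∈ Y then 1 else 0) =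
      if A ∈ X ∩ Y then 1 else 0 := by
    intro A
    by_cases hA : A ∈ X <;> simp [hA]
  rw [htotal, one_mul] at key
  simpa only [hind, mul_ite, mul_one, mul_zero, Finset.sum_ite_mem, Finset.univ_inter] using key
end

section
/- In $Q_7$, let $X = \{A \subseteq \{1,\dots,7\} : 1 \in A\}$, $Y = \{A : 2 \in A\}$, and $Z = \{A : |A| \ge 4\} \cup \{A : |A| = 3, 1 \notin A, 2 \notin A\}$, and let $\mu$ be the $3/8$-biased measure, $\mu(A) = (3/8)^{|A|}(5/8)^{7-|A|}$. Then $X$, $Y$, $Z$ are upward closed systems, $\mu(X) = \mu(Y) = 3/8$, and the $\mu$-measure of the family of sets lying in exactly one of $X, Y, Z$ exceeds $0.447 > \frac{4}{9}$. -/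
/-!
Every set `A ⊆ {1, …, 7}` has `μ(A) = 3^|A| 5^(7-|A|) / 8^7`, so the measure of a family is an
integer divided by `8^7 = 2097152` (`sum_biased_eq`), and that integer is found by enumerating the
128 subsets. It is `786432 = 3 · 8^6` for `X` and for `Y`.

A set lies in exactly one of `X, Y, Z` when it misses both `1` and `2` and has at least three of
the other five elements, or contains exactly one of `1, 2` and at most two of the other five. The
integer is therefore `25 · 9018 + 2 · 15 · 23750 = 937950`, and `937950 / 8^7 ≈ 0.44725`.
-/

/-- Clearing denominators in the `3/8`-biased measure of a family of subsets of `{1, …, 7}`. -/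
lemma sum_biased_eq {S : Finset (Finset ℕ)} (hS : S ⊆ (Finset.Icc 1 7).powerset) :
    (∑ A ∈ S, (3 / 8 : ℝ) ^ A.card * (5 / 8) ^ (7 - A.card)) =
      ((∑ A ∈ S, 3 ^ A.card * 5 ^ (7 - A.card) : ℕ) : ℝ) / 8 ^ 7 := by
  push_cast
  rw [Finset.sum_div]
  refine Finset.sum_congr rfl fun A hA => ?_
  have hc : A.card ≤ 7 := by
    simpa using Finset.card_le_card (Finset.mem_powerset.mp (hS hA))
  rw [div_pow, div_pow, div_mul_div_comm, ← pow_add, Nat.add_sub_cancel' hc]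


/-- The biased counterexample in `Q_7(3/8)`: with `X = {A : 1 ∈ A}`,
`Y = {A : 2 ∈ A}`, `Z = {A : |A| ≥ 4} ∪ {A : |A| = 3, 1 ∉ A, 2 ∉ A}` and
`μ(A) = (3/8)^|A| (5/8)^(7-|A|)`, the systems are upward closed,
`μ(X) = μ(Y) = 3/8`, and the `μ`-measure of the family of sets in exactly one
of `X, Y, Z` exceeds `0.447 > 4/9`. -/
theorem statement16 (X Y Z : Finset (Finset ℕ))
    (hX : X = (Finset.Icc 1 7).powerset.filter (fun A => 1 ∈ A))
    (hY : Y = (Finset.Icc 1 7).powerset.filter (fun A => 2 ∈ A))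
    (hZ : Z = (Finset.Icc 1 7).powerset.filter
        (fun A => 4 ≤ A.card ∨ (A.card = 3 ∧ 1 ∉ A ∧ 2 ∉ A))) :
    (∀ A B : Finset ℕ, A ∈ X → A ⊆ B → B ⊆ Finset.Icc 1 7 → B ∈ X) ∧
    (∀ A B : Finset ℕ, A ∈ Y → A ⊆ B → B ⊆ Finset.Icc 1 7 → B ∈ Y) ∧
    (∀ A B : Finset ℕ, A ∈ Z → A ⊆ B → B ⊆ Finset.Icc 1 7 → B ∈ Z) ∧
    (∑ A ∈ X, (3 / 8 : ℝ) ^ A.card * (5 / 8) ^ (7 - A.card)) = 3 / 8 ∧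
    (∑ A ∈ Y, (3 / 8 : ℝ) ^ A.card * (5 / 8) ^ (7 - A.card)) = 3 / 8 ∧
    (∑ A ∈ (X \ (Y ∪ Z)) ∪ (Y \ (X ∪ Z)) ∪ (Z \ (X ∪ Y)),
        (3 / 8 : ℝ) ^ A.card * (5 / 8) ^ (7 - A.card)) > 0.447 ∧
    (0.447 : ℝ) > 4 / 9 := by
  have hXs : X ⊆ (Finset.Icc 1 7).powerset := hX ▸ Finset.filter_subset _ _
  have hYs : Y ⊆ (Finset.Icc 1 7).powerset := hY ▸ Finset.filter_subset _ _
  have hZs : Z ⊆ (Finset.Icc 1 7).powerset := hZ ▸ Finset.filter_subset _ _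
  refine ⟨?_, ?_, ?_, ?_, ?_, ?_, by norm_num⟩
  · intro A B hA hAB hB
    simp only [hX, Finset.mem_filter, Finset.mem_powerset] at hA ⊢
    exact ⟨hB, hAB hA.2⟩
  · intro A B hA hAB hB
    simp only [hY, Finset.mem_filter, Finset.mem_powerset] at hA ⊢
    exact ⟨hB, hAB hA.2⟩
  · intro A B hA hAB hB
    simp only [hZ, Finset.mem_filter, Finset.mem_powerset] at hA ⊢
    refine ⟨hB, ?_⟩
    -- A proper superset of a 3-set has at least 4 elements, so only `A = B` needs `1, 2 ∉ A`.
    rcases hAB.eq_or_ssubset with rfl | h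
    · exact hA.2
    · have := Finset.card_lt_card h
      omega
  · rw [sum_biased_eq hXs, hX,
      show ∑ A ∈ (Finset.Icc 1 7).powerset.filter (fun A => 1 ∈ A),
        3 ^ A.card * 5 ^ (7 - A.card) = 786432 by decide +kernel]
    norm_num
  · rw [sum_biased_eq hYs, hY,
      show ∑ A ∈ (Finset.Icc 1 7).powerset.filter (fun A => 2 ∈ A),
        3 ^ A.card * 5 ^ (7 - A.card) = 786432 by decide +kernel]
    norm_num
  · have hs : (X \ (Y ∪ Z)) ∪ (Y \ (X ∪ Z)) ∪ (Z \ (X ∪ Y)) ⊆ (Finset.Icc 1 7).powerset :=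
      Finset.union_subset (Finset.union_subset (Finset.sdiff_subset.trans hXs)
        (Finset.sdiff_subset.trans hYs)) (Finset.sdiff_subset.trans hZs)
    have hsum : ∑ A ∈ (X \ (Y ∪ Z)) ∪ (Y \ (X ∪ Z)) ∪ (Z \ (X ∪ Y)),
        3 ^ A.card * 5 ^ (7 - A.card) = 937950 := by
      subst hX hY hZ
      decide +kernel
    rw [sum_biased_eq hs, hsum]
    norm_num
end

section
/- There exists a map $f : Q_{21} \to Q_7$ such that: (i) $f$ is monotone, i.e., $A \subseteq B$ implies $f(A) \subseteq f(B)$ (so the preimage of any upward closed system in $Q_7$ is an upward closed system in $Q_{21}$); and (ii) for every $S \subseteq \{1,\dots,7\}$, the number of $A \subseteq \{1,\dots,21\}$ with $f(A) = S$ equals $3^{|S|} \cdot 5^{7-|S|}$ (so the uniform measure on $Q_{21}$ pushes forward to the $3/8$-biased measure on $Q_7$, since $3^{|S|} 5^{7-|S|} / 2^{21} = (3/8)^{|S|}(5/8)^{7-|S|}$). -/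
/-!
Split the 21 coordinates into seven blocks of three, so that `A ↦ (i ↦ blockSlice A i)` is a
bijection from `Q_21` onto `(Q_3)^7`. The map `f` collects the blocks `i` whose slice lies in the
upper set `blockUpper ⊆ Q_3` of size `3`; it is monotone because slicing is monotone and
`blockUpper` is an upper set. Under the bijection the fibre of `f` over `S` is the product of one
copy of `blockUpper` for each `i ∈ S` and one copy of its complement, of size `5`, for each
`i ∉ S`, which gives `3 ^ |S| * 5 ^ (7 - |S|)` preimages.
-/

/-- The `21` coordinates as seven consecutive blocks of three: `(i, j)` is coordinate `3 * i + j`. -/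
def blockEquiv : Fin 7 × Fin 3 ≃ Fin 21 := finProdFinEquiv

/-- The trace of `A` on the `i`-th block, as a subset of `Fin 3`. -/
def blockSlice (A : Finset (Fin 21)) (i : Fin 7) : Finset (Fin 3) :=
  Finset.univ.filter fun j => blockEquiv (i, j) ∈ A

/-- The upper set `{{1,2}, {1,3}, {1,2,3}}` of `Q_3`, with coordinates numbered from `0`. -/
def blockUpper : Finset (Finset (Fin 3)) := {{0, 1}, {0, 2}, {0, 1, 2}}

lemma blockUpper_mono : ∀ s t : Finset (Fin 3), s ⊆ t → s ∈ blockUpper → t ∈ blockUpper := by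
  decide

lemma card_blockUpper : blockUpper.card = 3 := by decide

lemma card_compl_blockUpper : blockUpperᶜ.card = 5 := by decide

lemma blockSlice_mono {A B : Finset (Fin 21)} (h : A ⊆ B) (i : Fin 7) :
    blockSlice A i ⊆ blockSlice B i :=
  Finset.monotone_filter_right _ fun _ _ hj => h hj

/-- A subset of the `21` coordinates is the same as a choice of a subset of each block. -/
def sliceEquiv : Finset (Fin 21) ≃ (Fin 7 → Finset (Fin 3)) where
  toFun := blockSlice
  invFun g := Finset.univ.filter fun k => (blockEquiv.symm k).2 ∈ g (blockEquiv.symm k).1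
  left_inv A := by ext k; simp [blockSlice]
  right_inv g := by ext i j; simp [blockSlice]

theorem statement18 :
    ∃ f : Finset (Fin 21) → Finset (Fin 7),
      (∀ A B : Finset (Fin 21), A ⊆ B → f A ⊆ f B) ∧
      ∀ S : Finset (Fin 7),
        ((Finset.univ : Finset (Finset (Fin 21))).filter
            (fun A => f A = S)).card = 3 ^ S.card * 5 ^ (7 - S.card) := by
  refine ⟨fun A => Finset.univ.filter fun i => blockSlice A i ∈ blockUpper, ?_, fun S => ?_⟩
  · exact fun A B h => Finset.monotone_filter_right _
      fun i _ hi => blockUpper_mono _ _ (blockSlice_mono h i) hi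
  · have fibre : ((Finset.univ : Finset (Finset (Fin 21))).filter
        (fun A => (Finset.univ.filter fun i => blockSlice A i ∈ blockUpper) = S)).card =
        (Fintype.piFinset fun i => if i ∈ S then blockUpper else blockUpperᶜ).card := by
      refine Finset.card_equiv sliceEquiv fun A => ?_
      simp only [Finset.mem_filter, Finset.mem_univ, true_and, Fintype.mem_piFinset,
        Finset.ext_iff (s₂ := S)]
      refine forall_congr' fun i => ?_
      change _ ↔ blockSlice A i ∈ _
      by_cases hi : i ∈ S <;> simp [hi]
    rw [fibre, Fintype.card_piFinset]
    simp only [apply_ite Finset.card, card_blockUpper, card_compl_blockUpper]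
    rw [Finset.prod_ite, Finset.prod_const, Finset.prod_const, Finset.filter_mem_eq_inter,
      Finset.univ_inter, Finset.filter_notMem_eq_sdiff, ← Finset.compl_eq_univ_sdiff,
      Finset.card_compl, Fintype.card_fin]
end
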